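/- arXiv:2301.05153 — 2 statements merged into one kernel-verified Lean document; each statement's English description precedes it below -/
import Mathlib

section
/- Let μ be a multicore lying in a core block, let a' be a multicharge with a'_j ≡ a_j (mod e) for all j, and let (b_0,…,b_{e−1}) be a base tuple for μ with respect to a' (so ℓ^{a'}_{ij}(μ) ∈ {b_i, b_i+1} for all i,j). Then for every j ∈ {1,…,r}: δ^j_i(μ) ∈ {b_i − b_{i−1} − 1, b_i − b_{i−1}, b_i − b_{i−1} + 1} for every i ∈ {1,…,e−1}, and δ^j_0(μ) ∈ {b_0 − b_{e−1} − 2, b_0 − b_{e−1} − 1, b_0 − b_{e−1}}. -/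
/-!
Combinatorial framework for multipartitions, residues, β-sets, abacus levels,
weights, hubs, core blocks and Scopes-type moves, following Fayers and the paper.
Rows and columns of Young diagrams are indexed from 0, so the node in row `b`
and column `c` (0-based) of component `j` has residue `a j + c - b` mod `e`.
-/

open scoped Classical

namespace AK

/-- A partition, given by its (antitone, finitely supported) sequence of parts,
rows indexed from `0`. -/
structure PartitionFun : Type where
  part : ℕ → ℕ
  antitone : Antitone part
  finite_support : ∃ N, ∀ b, N ≤ b → part b = 0

/-- The node in row `b`, column `c` (0-based) belongs to the Young diagram. -/
def PartitionFun.InDiag (lam : PartitionFun) (b c : ℕ) : Prop := c < lam.part b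

/-- The node `(b,c)` is removable: deleting it leaves the diagram of a partition. -/
def PartitionFun.Removable (lam : PartitionFun) (b c : ℕ) : Prop :=
  lam.part b = c + 1 ∧ lam.part (b + 1) ≤ c

/-- The node `(b,c)` is addable: adjoining it gives the diagram of a partition. -/
def PartitionFun.Addable (lam : PartitionFun) (b c : ℕ) : Prop :=
  lam.part b = c ∧ (b = 0 ∨ lam.part b < lam.part (b - 1))

/-- An `r`-multipartition. -/
abbrev Multipartition (r : ℕ) := Fin r → PartitionFun

/-- Nodes: `(b, c, j)` with row `b`, column `c`, component `j`. -/
abbrev Node (r : ℕ) := ℕ × ℕ × Fin r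

/-- The Young diagram of a multipartition, as a set of nodes. -/
def diag {r : ℕ} (lam : Multipartition r) : Set (Node r) :=
  {x | (lam x.2.2).InDiag x.1 x.2.1}

/-- The size `n` of a multipartition of `n`. -/
noncomputable def msize {r : ℕ} (lam : Multipartition r) : ℕ :=
  Set.ncard (diag lam)

/-- `c_i(λ)`: the number of nodes of residue `i` (mod `e`). -/
noncomputable def nodeCount {r : ℕ} (e : ℕ) (a : Fin r → ℤ) (lam : Multipartition r)
    (i : ℤ) : ℕ :=
  Set.ncard {x : Node r | (lam x.2.2).InDiag x.1 x.2.1 ∧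
    (a x.2.2 + (x.2.1 : ℤ) - (x.1 : ℤ)) % (e : ℤ) = i % e}

/-- Number of removable nodes of residue `i` in component `j`. -/
noncomputable def removableCount {r : ℕ} (e : ℕ) (a : Fin r → ℤ) (lam : Multipartition r)
    (i : ℤ) (j : Fin r) : ℕ :=
  Set.ncard {p : ℕ × ℕ | (lam j).Removable p.1 p.2 ∧
    (a j + (p.2 : ℤ) - (p.1 : ℤ)) % (e : ℤ) = i % e}

/-- Number of addable nodes of residue `i` in component `j`. -/
noncomputable def addableCount {r : ℕ} (e : ℕ) (a : Fin r → ℤ) (lam : Multipartition r)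
    (i : ℤ) (j : Fin r) : ℕ :=
  Set.ncard {p : ℕ × ℕ | (lam j).Addable p.1 p.2 ∧
    (a j + (p.2 : ℤ) - (p.1 : ℤ)) % (e : ℤ) = i % e}

/-- `δ^j_i(λ)` = (removable `i`-nodes of component `j`) − (addable `i`-nodes of component `j`). -/
noncomputable def delta {r : ℕ} (e : ℕ) (a : Fin r → ℤ) (lam : Multipartition r)
    (i : ℤ) (j : Fin r) : ℤ :=
  (removableCount e a lam i j : ℤ) - (addableCount e a lam i j : ℤ)

/-- The hub `δ_i(λ) = Σ_j δ^j_i(λ)`. -/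
noncomputable def hub {r : ℕ} (e : ℕ) (a : Fin r → ℤ) (lam : Multipartition r) (i : ℤ) : ℤ :=
  ∑ j : Fin r, delta e a lam i j

/-- Two multipartitions have the same hub. -/
def SameHub {r : ℕ} (e : ℕ) (a : Fin r → ℤ) (lam mu : Multipartition r) : Prop :=
  ∀ i : ℤ, hub e a lam i = hub e a mu i

/-- `d_i(m) = min { δ^j_i(m) : 1 ≤ j ≤ r }`. -/
noncomputable def dmin {r : ℕ} (e : ℕ) (a : Fin r → ℤ) (lam : Multipartition r) (i : ℤ) : ℤ :=
  sInf {x : ℤ | ∃ j : Fin r, delta e a lam i j = x}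

/-- The weight `w(λ) = Σ_j c_{a_j}(λ) − (1/2) Σ_{i∈ℤ/eℤ} (c_i(λ) − c_{i+1}(λ))²`. -/
noncomputable def weight {r : ℕ} (e : ℕ) (a : Fin r → ℤ) (lam : Multipartition r) : ℚ :=
  (∑ j : Fin r, (nodeCount e a lam (a j) : ℚ)) -
    (1 / 2 : ℚ) * ∑ i ∈ Finset.range e,
      ((nodeCount e a lam (i : ℤ) : ℚ) - (nodeCount e a lam ((i : ℤ) + 1) : ℚ)) ^ 2

/-- The β-set `B^j = {λ_b + a_j − b : b ≥ 1}` (here with rows indexed from 0). -/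
def betaSet (aj : ℤ) (lam : PartitionFun) : Set ℤ :=
  {x | ∃ b : ℕ, x = (lam.part b : ℤ) + aj - ((b : ℤ) + 1)}

/-- A partition is an `e`-core: `β ∈ B` implies `β − e ∈ B`. -/
def IsECore (e : ℕ) (aj : ℤ) (lam : PartitionFun) : Prop :=
  ∀ x ∈ betaSet aj lam, x - (e : ℤ) ∈ betaSet aj lam

/-- A multicore: all components are `e`-cores. -/
def IsMulticore {r : ℕ} (e : ℕ) (a : Fin r → ℤ) (lam : Multipartition r) : Prop :=
  ∀ j, IsECore e (a j) (lam j)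

/-- `ℓ^a_{ij}(λ)`: the level of the lowest bead on runner `i`, i.e. the largest `x`
with `x·e + i` in the β-set. -/
noncomputable def level (e : ℕ) (aj : ℤ) (lam : PartitionFun) (i : ℕ) : ℤ :=
  sSup {x : ℤ | x * (e : ℤ) + (i : ℤ) ∈ betaSet aj lam}

/-- `γ^{jk}_i(λ) = ℓ^a_{ij}(λ) − ℓ^a_{ik}(λ)`. -/
noncomputable def gamma {r : ℕ} (e : ℕ) (a : Fin r → ℤ) (lam : Multipartition r)
    (i : ℕ) (j k : Fin r) : ℤ :=
  level e (a j) (lam j) i - level e (a k) (lam k) i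

/-- `γ^{jk}_{il}(λ) = γ^{jk}_i(λ) − γ^{jk}_l(λ)`. -/
noncomputable def gammaD {r : ℕ} (e : ℕ) (a : Fin r → ℤ) (lam : Multipartition r)
    (i l : ℕ) (j k : Fin r) : ℤ :=
  gamma e a lam i j k - gamma e a lam l j k

/-- Move a bead from runner `i` to runner `l` in the β-set `S`: replace the largest
element of `S` congruent to `i` mod `e` by the smallest integer congruent to `l`
mod `e` not in `S`. -/
noncomputable def moveBead (e : ℕ) (i l : ℕ) (S : Set ℤ) : Set ℤ :=
  insert (sInf {x : ℤ | x % (e : ℤ) = (l : ℤ) % e ∧ x ∉ S})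
    (S \ {sSup {x : ℤ | x % (e : ℤ) = (i : ℤ) % e ∧ x ∈ S}})

/-- The effect of `s^{jk}_{il}` on the tuple of β-sets: move a bead from runner `i`
to runner `l` in component `j`, and from runner `l` to runner `i` in component `k`. -/
noncomputable def swapSets {r : ℕ} (e i l : ℕ) (j k : Fin r) (S : Fin r → Set ℤ) :
    Fin r → Set ℤ :=
  Function.update (Function.update S j (moveBead e i l (S j))) k
    (moveBead e l i (Function.update S j (moveBead e i l (S j)) k))

/-- `m' = s^{jk}_{il}(m)`, expressed via β-sets. -/
def IsSwap {r : ℕ} (e : ℕ) (a : Fin r → ℤ) (i l : ℕ) (j k : Fin r)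
    (m m' : Multipartition r) : Prop :=
  ∀ j', betaSet (a j') (m' j') = swapSets e i l j k (fun t => betaSet (a t) (m t)) j'

/-- `λ` lies in a core block: its weight is minimal among the weights of all
multipartitions with the same hub. -/
def MinimalWeight {r : ℕ} (e : ℕ) (a : Fin r → ℤ) (lam : Multipartition r) : Prop :=
  ∀ mu : Multipartition r, SameHub e a lam mu → weight e a lam ≤ weight e a mu

/-- `(b_0,…,b_{e−1})` is a base tuple for `mu` with respect to the multicharge `a'`
(congruent to `a` componentwise mod `e`): each `ℓ^{a'}_{ij}(mu)` is `b i` or `b i + 1`. -/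
def IsBaseTuple {r : ℕ} (e : ℕ) (a : Fin r → ℤ) (mu : Multipartition r)
    (a' : Fin r → ℤ) (b : ℕ → ℤ) : Prop :=
  (∀ j, (e : ℤ) ∣ (a' j - a j)) ∧
    ∀ i < e, ∀ j, level e (a' j) (mu j) i = b i ∨ level e (a' j) (mu j) i = b i + 1

/-- `K_i(C)` for the core block of `mu`: among all base tuples (over all admissible
multicharges), take `b i` maximal and then `b (i−1)` minimal, and set
`K_i = b_i − b_{i−1} − 1` for `i ≠ 0`, `K_0 = b_0 − b_{e−1} − 2`. -/
noncomputable def Kconst {r : ℕ} (e : ℕ) (a : Fin r → ℤ) (mu : Multipartition r)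
    (i : ℕ) : ℤ :=
  let Bi : ℤ := sSup {x : ℤ | ∃ a' bt, IsBaseTuple e a mu a' bt ∧ bt i = x}
  let iprev : ℕ := if i = 0 then e - 1 else i - 1
  let Bp : ℤ := sInf {x : ℤ | ∃ a' bt, IsBaseTuple e a mu a' bt ∧ bt i = Bi ∧ bt iprev = x}
  Bi - Bp - (if i = 0 then 2 else 1)

/-- The map `φ_i : ℤ → ℤ`. -/
def phiMap (e i : ℕ) (x : ℤ) : ℤ :=
  if x % (e : ℤ) = ((i : ℤ) - 1) % e then x + 1
  else if x % (e : ℤ) = (i : ℤ) % e then x - 1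
  else x

/-- Lexicographic order on multipartitions: `λ > μ`. -/
def lexGT {r : ℕ} (lam mu : Multipartition r) : Prop :=
  ∃ j : Fin r, (∀ j' < j, (lam j').part = (mu j').part) ∧
    ∃ i : ℕ, (∀ i' < i, (lam j).part i' = (mu j).part i') ∧
      (mu j).part i < (lam j).part i

/-- `x` is above `y`: `j < j'` or (`j = j'` and `b < b'`). -/
def NodeAbove {r : ℕ} (x y : Node r) : Prop :=
  x.2.2 < y.2.2 ∨ (x.2.2 = y.2.2 ∧ x.1 < y.1)

/-- The order on nodes: `x < y` iff `y` is above `x`. -/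
def NodeLT {r : ℕ} (x y : Node r) : Prop := NodeAbove y x

/-- `N_A(λ)` = (addable `i`-nodes of `λ` below `A`) − (removable `i`-nodes of `λ` below `A`). -/
noncomputable def Nfac {r : ℕ} (e : ℕ) (a : Fin r → ℤ) (lam : Multipartition r)
    (i : ℤ) (A : Node r) : ℤ :=
  (Set.ncard {y : Node r | (lam y.2.2).Addable y.1 y.2.1 ∧
      (a y.2.2 + (y.2.1 : ℤ) - (y.1 : ℤ)) % (e : ℤ) = i % e ∧ NodeAbove A y} : ℤ) -
  (Set.ncard {y : Node r | (lam y.2.2).Removable y.1 y.2.1 ∧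
      (a y.2.2 + (y.2.1 : ℤ) - (y.1 : ℤ)) % (e : ℤ) = i % e ∧ NodeAbove A y} : ℤ)

/-- `lam` is obtained from `mu` by adding one `e`-rim hook to some component:
on β-sets, some `β ∈ B^j` with `β + e ∉ B^j` is replaced by `β + e`. -/
def AddRimHook {r : ℕ} (e : ℕ) (a : Fin r → ℤ) (mu lam : Multipartition r) : Prop :=
  ∃ (j : Fin r) (β : ℤ), β ∈ betaSet (a j) (mu j) ∧ β + (e : ℤ) ∉ betaSet (a j) (mu j) ∧
    betaSet (a j) (lam j) = insert (β + (e : ℤ)) (betaSet (a j) (mu j) \ {β}) ∧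
    ∀ j' ≠ j, betaSet (a j') (lam j') = betaSet (a j') (mu j')

/-- The number of inversions (length) of a permutation of `Fin d`. -/
noncomputable def permLength (d : ℕ) (σ : Equiv.Perm (Fin d)) : ℕ :=
  (Finset.univ.filter (fun p : Fin d × Fin d => p.1 < p.2 ∧ σ p.2 < σ p.1)).card

/-!
The `i`-removable nodes of a partition correspond, through their contents, to the beads `y ≡ i` of
its β-set with `y - 1` empty, and the `i`-addable nodes to the empty positions `y ≡ i` with a bead
at `y - 1`. For an `e`-core every runner of the abacus is filled up to its level, so these positions
form the intervals between the levels `L` of runner `i` and `M` of runner `i - 1`, and their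
difference in number is `L - M`. For `i = 0` the preceding runner is runner `e - 1` moved down by
one row, whence the extra `-1`. Base tuples only restrict the levels to two values each.
-/

namespace PartitionFun

variable {lam : PartitionFun} {a : ℤ}

theorem strictAnti_part_sub (lam : PartitionFun) :
    StrictAnti fun b : ℕ => (lam.part b : ℤ) - b := by
  intro b b' hlt
  have hle := lam.antitone hlt.le
  dsimp only
  omega

theorem Removable.mem_betaSet {b c : ℕ} (h : lam.Removable b c) : a + c - b ∈ betaSet a lam :=
  ⟨b, by rw [h.1]; push_cast; ring⟩

theorem Removable.sub_one_notMem_betaSet {b c : ℕ} (h : lam.Removable b c) :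
    a + c - b - 1 ∉ betaSet a lam := by
  rintro ⟨b', hb'⟩
  obtain ⟨hb, hsucc⟩ := h
  rcases le_or_gt b' b with hle | hlt
  · have := lam.antitone hle
    omega
  · have : lam.part b' ≤ lam.part (b + 1) := lam.antitone hlt
    omega

theorem Addable.sub_one_mem_betaSet {b c : ℕ} (h : lam.Addable b c) :
    a + c - b - 1 ∈ betaSet a lam :=
  ⟨b, by rw [h.1]; ring⟩

theorem Addable.notMem_betaSet {b c : ℕ} (h : lam.Addable b c) : a + c - b ∉ betaSet a lam := by
  rintro ⟨b', hb'⟩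
  obtain ⟨hb, hpred⟩ := h
  rcases le_or_gt b b' with hle | hlt
  · have := lam.antitone hle
    omega
  · have := lam.antitone (Nat.le_sub_one_of_lt hlt)
    omega

theorem exists_removable {y : ℤ} (hy : y ∈ betaSet a lam) (hy' : y - 1 ∉ betaSet a lam) :
    ∃ b c : ℕ, lam.Removable b c ∧ a + c - b = y := by
  obtain ⟨b, hb⟩ := hy
  have hle : lam.part (b + 1) ≤ lam.part b := lam.antitone b.le_succ
  have hne : lam.part (b + 1) ≠ lam.part b := fun h => hy' ⟨b + 1, by rw [h]; push_cast; omega⟩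
  exact ⟨b, lam.part b - 1, ⟨by omega, by omega⟩, by omega⟩

theorem exists_addable {y : ℤ} (hy : y - 1 ∈ betaSet a lam) (hy' : y ∉ betaSet a lam) :
    ∃ b c : ℕ, lam.Addable b c ∧ a + c - b = y := by
  obtain ⟨b, hb⟩ := hy
  refine ⟨b, lam.part b, ⟨rfl, or_iff_not_imp_left.2 fun hb0 => ?_⟩, by omega⟩
  have hle := lam.antitone (b.sub_le 1)
  have hne : lam.part (b - 1) ≠ lam.part b := fun h => hy' ⟨b - 1, by rw [h]; omega⟩
  omega

end PartitionFun

/-- The content of the node `p = (b, c)` (row, column) of a component with charge `a`; its class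
modulo `e` is the residue of `p`. -/
def content (a : ℤ) (p : ℕ × ℕ) : ℤ := a + p.2 - p.1

section BetaSet

variable (a : ℤ) (lam : PartitionFun)

theorem injOn_content (k : ℕ) : Set.InjOn (content a) {p | lam.part p.1 = p.2 + k} := by
  rintro ⟨b, c⟩ hb ⟨b', c'⟩ hb' heq
  simp only [content, Set.mem_ofPred_eq] at hb hb' heq
  obtain rfl : b = b' := lam.strictAnti_part_sub.injective (by omega)
  exact Prod.ext rfl (by omega)

theorem bijOn_content_removable :
    Set.BijOn (content a) {p | lam.Removable p.1 p.2}
      {y | y ∈ betaSet a lam ∧ y - 1 ∉ betaSet a lam} := by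
  refine ⟨fun p hp => ⟨hp.mem_betaSet, hp.sub_one_notMem_betaSet⟩,
    (injOn_content a lam 1).mono fun p hp => hp.1, ?_⟩
  rintro y ⟨hy, hy'⟩
  obtain ⟨b, c, hbc, rfl⟩ := PartitionFun.exists_removable hy hy'
  exact ⟨(b, c), hbc, rfl⟩

theorem bijOn_content_addable :
    Set.BijOn (content a) {p | lam.Addable p.1 p.2}
      {y | y - 1 ∈ betaSet a lam ∧ y ∉ betaSet a lam} := by
  refine ⟨fun p hp => ⟨hp.sub_one_mem_betaSet, hp.notMem_betaSet⟩,
    (injOn_content a lam 0).mono fun p hp => hp.1, ?_⟩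
  rintro y ⟨hy, hy'⟩
  obtain ⟨b, c, hbc, rfl⟩ := PartitionFun.exists_addable hy hy'
  exact ⟨(b, c), hbc, rfl⟩

theorem bddAbove_betaSet : BddAbove (betaSet a lam) := by
  refine ⟨lam.part 0 + a, ?_⟩
  rintro _ ⟨b, rfl⟩
  have := lam.antitone b.zero_le
  omega

theorem exists_Iic_subset_betaSet : ∃ m, Set.Iic m ⊆ betaSet a lam := by
  obtain ⟨N, hN⟩ := lam.finite_support
  refine ⟨a - 1 - N, fun x hx => ⟨(a - 1 - x).toNat, ?_⟩⟩
  rw [Set.mem_Iic] at hx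
  rw [hN _ (by omega)]
  omega

variable {a lam}

theorem mem_betaSet_iff_sub_mem_betaSet (a' : ℤ) {x : ℤ} :
    x ∈ betaSet a' lam ↔ x - (a' - a) ∈ betaSet a lam :=
  exists_congr fun _ => ⟨fun h => by linarith, fun h => by linarith⟩

end BetaSet

namespace IsECore

variable {e : ℕ} {a : ℤ} {lam : PartitionFun}

theorem of_charge (h : IsECore e a lam) (a' : ℤ) : IsECore e a' lam := by
  intro x hx
  rw [mem_betaSet_iff_sub_mem_betaSet (a := a)] at hx ⊢
  rw [sub_right_comm]
  exact h _ hx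

theorem sub_mul_mem_betaSet (h : IsECore e a lam) {x : ℤ} (hx : x ∈ betaSet a lam) (n : ℕ) :
    x - n * e ∈ betaSet a lam := by
  induction n with
  | zero => simpa using hx
  | succ n ih =>
    convert h _ ih using 1
    push_cast
    ring

theorem mul_add_mem_betaSet_iff_le_level (h : IsECore e a lam) (he : 0 < e) (i : ℕ) (x : ℤ) :
    x * e + i ∈ betaSet a lam ↔ x ≤ level e a lam i := by
  set runner : Set ℤ := {x | x * e + i ∈ betaSet a lam}
  have hbdd : BddAbove runner := by
    obtain ⟨m, hm⟩ := bddAbove_betaSet a lam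
    refine ⟨|m|, fun y hy => ?_⟩
    have hym : y * e + i ≤ m := hm hy
    by_contra! hlt
    nlinarith [le_abs_self m, abs_nonneg m]
  have hne : runner.Nonempty := by
    obtain ⟨m, hm⟩ := exists_Iic_subset_betaSet a lam
    refine ⟨-|m - i|, hm ?_⟩
    rw [Set.mem_Iic]
    nlinarith [neg_abs_le (m - i), abs_nonneg (m - i)]
  refine ⟨fun hx => le_csSup hbdd hx, fun hx => ?_⟩
  have htop : level e a lam i * e + i ∈ betaSet a lam := Int.csSup_mem hne hbdd
  convert h.sub_mul_mem_betaSet htop (level e a lam i - x).toNat using 1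
  rw [Int.toNat_of_nonneg (sub_nonneg.2 hx)]
  ring

end IsECore

theorem bijOn_mul_add_residueClass {e : ℕ} (he : 0 < e) (i : ℤ) (s : Set ℤ) :
    Set.BijOn (fun x : ℤ => x * e + i) {x | x * e + i ∈ s} (s ∩ {y | y % e = i % e}) := by
  refine ⟨fun x hx => ⟨hx, by simp⟩, fun x _ y _ hxy => ?_, ?_⟩
  · have he0 : (e : ℤ) ≠ 0 := by omega
    exact mul_right_cancel₀ he0 (add_right_cancel hxy)
  · rintro y ⟨hy, hmod⟩
    obtain ⟨x, hx⟩ : (e : ℤ) ∣ y - i := Int.ModEq.dvd (Eq.symm hmod)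
    obtain rfl : y = x * e + i := by linarith
    exact ⟨x, hy, rfl⟩

theorem ncard_nodes_of_residue {e : ℕ} (he : 0 < e) {a : ℤ} {nodes : Set (ℕ × ℕ)} {s : Set ℤ}
    (h : Set.BijOn (content a) nodes s) (i : ℤ) :
    (nodes ∩ {p | content a p % e = i % e}).ncard = {x : ℤ | x * e + i ∈ s}.ncard := by
  have hres : Set.BijOn (content a) (nodes ∩ {p | content a p % e = i % e})
      (s ∩ {y | y % e = i % e}) := by
    convert h.subset_right Set.inter_subset_left using 1
    ext p
    exact and_congr_right fun hp => (and_iff_right (h.mapsTo hp)).symm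
  rw [hres.ncard_eq, (bijOn_mul_add_residueClass he i s).ncard_eq]

section Multipartition

variable {e r : ℕ} {a a' : Fin r → ℤ} {lam : Multipartition r} {j : Fin r}

theorem removableCount_eq_ncard (he : 0 < e) (i : ℤ) :
    removableCount e a lam i j = {x : ℤ | x * e + i ∈ betaSet (a j) (lam j) ∧
      x * e + i - 1 ∉ betaSet (a j) (lam j)}.ncard :=
  ncard_nodes_of_residue he (bijOn_content_removable (a j) (lam j)) i

theorem addableCount_eq_ncard (he : 0 < e) (i : ℤ) :
    addableCount e a lam i j = {x : ℤ | x * e + i - 1 ∈ betaSet (a j) (lam j) ∧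
      x * e + i ∉ betaSet (a j) (lam j)}.ncard :=
  ncard_nodes_of_residue he (bijOn_content_addable (a j) (lam j)) i

theorem delta_eq_of_dvd_sub (h : (e : ℤ) ∣ a' j - a j) (i : ℤ) :
    delta e a lam i j = delta e a' lam i j := by
  have hres (p : ℕ × ℕ) : (a j + p.2 - p.1) % (e : ℤ) = (a' j + p.2 - p.1) % e :=
    ((Int.modEq_iff_dvd.2 h).add_right _).sub_right _
  simp only [delta, removableCount, addableCount, hres]

theorem delta_eq_sub_of_runners (he : 0 < e) {i L M : ℤ}
    (hL : ∀ x : ℤ, x * e + i ∈ betaSet (a j) (lam j) ↔ x ≤ L)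
    (hM : ∀ x : ℤ, x * e + i - 1 ∈ betaSet (a j) (lam j) ↔ x ≤ M) :
    delta e a lam i j = L - M := by
  have hIoc (k l : ℤ) : {x : ℤ | x ≤ l ∧ ¬x ≤ k}.ncard = (l - k).toNat := by
    rw [← Int.card_Ioc, ← Set.ncard_coe_finset]
    congr 1
    ext x
    simp [and_comm]
  simp only [delta, removableCount_eq_ncard he, addableCount_eq_ncard he, hL, hM, hIoc]
  omega

theorem delta_eq_level_sub_level_pred (he : 0 < e) (h : IsECore e (a j) (lam j)) {i : ℕ}
    (hi : 1 ≤ i) :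
    delta e a lam i j = level e (a j) (lam j) i - level e (a j) (lam j) (i - 1) := by
  refine delta_eq_sub_of_runners he (h.mul_add_mem_betaSet_iff_le_level he i) fun x => ?_
  rw [← h.mul_add_mem_betaSet_iff_le_level he, Nat.cast_pred hi, add_sub_assoc]

theorem delta_zero_eq_level_sub_level_sub_one (he : 0 < e) (h : IsECore e (a j) (lam j)) :
    delta e a lam 0 j = level e (a j) (lam j) 0 - level e (a j) (lam j) (e - 1) - 1 := by
  rw [sub_sub]
  refine delta_eq_sub_of_runners he (h.mul_add_mem_betaSet_iff_le_level he 0) fun x => ?_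
  have hshift : x * (e : ℤ) + 0 - 1 = (x - 1) * e + (e - 1 : ℕ) := by
    rw [Nat.cast_pred he]
    ring
  rw [hshift, h.mul_add_mem_betaSet_iff_le_level he, sub_le_iff_le_add]

theorem stmt_9_general (he : 0 < e) (hcore : IsMulticore e a lam)
    (hcongr : ∀ j, (e : ℤ) ∣ a' j - a j) (j : Fin r) :
    (∀ i : ℕ, 1 ≤ i →
      delta e a lam i j = level e (a' j) (lam j) i - level e (a' j) (lam j) (i - 1)) ∧
    delta e a lam 0 j = level e (a' j) (lam j) 0 - level e (a' j) (lam j) (e - 1) - 1 := by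
  have hcore' : IsECore e (a' j) (lam j) := (hcore j).of_charge (a' j)
  simp only [delta_eq_of_dvd_sub (hcongr j)]
  exact ⟨fun i hi => delta_eq_level_sub_level_pred he hcore' hi,
    delta_zero_eq_level_sub_level_sub_one he hcore'⟩

end Multipartition

/-- displays (3.2)–(3.3): if `μ` is a multicore lying in a core block
and `(b_0,…,b_{e−1})` is a base tuple for `μ` with respect to an admissible
multicharge `a'`, then for every component `j`,
`δ^j_i(μ) ∈ {b_i − b_{i−1} − 1, b_i − b_{i−1}, b_i − b_{i−1} + 1}` for `1 ≤ i ≤ e−1`,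
and `δ^j_0(μ) ∈ {b_0 − b_{e−1} − 2, b_0 − b_{e−1} − 1, b_0 − b_{e−1}}`. -/
theorem stmt_9 {e r : ℕ} (he : 2 ≤ e) (hr : 0 < r) (a : Fin r → ℤ)
    (mu : Multipartition r) (hmucore : IsMulticore e a mu)
    (hmumin : MinimalWeight e a mu)
    (a' : Fin r → ℤ) (b : ℕ → ℤ) (hbt : IsBaseTuple e a mu a' b) :
    ∀ j : Fin r,
      (∀ i : ℕ, 1 ≤ i → i < e →
        delta e a mu (i : ℤ) j = b i - b (i - 1) - 1 ∨
        delta e a mu (i : ℤ) j = b i - b (i - 1) ∨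
        delta e a mu (i : ℤ) j = b i - b (i - 1) + 1) ∧
      (delta e a mu 0 j = b 0 - b (e - 1) - 2 ∨
        delta e a mu 0 j = b 0 - b (e - 1) - 1 ∨
        delta e a mu 0 j = b 0 - b (e - 1)) := by
  intro j
  obtain ⟨hcongr, hlevel⟩ := hbt
  obtain ⟨hdelta, hdelta_zero⟩ := stmt_9_general (by omega) hmucore hcongr j
  refine ⟨fun i hi hie => ?_, ?_⟩
  · have := hdelta i hi
    have := hlevel i hie j
    have := hlevel (i - 1) (by omega) j
    omega
  · have := hlevel 0 (by omega) j
    have := hlevel (e - 1) (by omega) j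
    omega

end AK
end

section
/- Fix i ∈ {0,…,e−1}. Let B be a block of multipartitions of n with core block C, and suppose that w(B) ≤ w(C) + K_i(C)·r and δ_i(B) ≥ 0. Then for every multipartition λ in B and every j ∈ {1,…,r}: if i ≠ 0, there is no integer b with b ≡ i−1 (mod e), b ∈ B^j and b+1 ∉ B^j; and if i = 0, there is no integer b with b ≡ e−1 (mod e), b ∈ B^j and b+1, b+e+1 ∉ B^j. (In other words, no component of λ has an abacus configuration with a bead on runner i−1 and an empty position immediately to its right on runner i.) -/
/-!
Combinatorial framework for multipartitions, residues, β-sets, abacus levels,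
weights, hubs, core blocks and Scopes-type moves, following Fayers and the paper.
Rows and columns of Young diagrams are indexed from 0, so the node in row `b`
and column `c` (0-based) of component `j` has residue `a j + c - b` mod `e`.
-/

open scoped Classical

namespace AK

/-!
Let `μ` be the multicore of minimal weight, `λ` a multipartition with the same hub, and `b` a
base tuple of `μ` for the multicharge `a + e·m`. Equal hubs force equal numbers of beads on every
runner, and therefore `w(λ) = w(μ) + r·t`, where `t` is the total level of the beads of `λ` minus
that of the beads of `μ`. Since only the residue of a bead matters for the correction term, `t` is
also the difference of the bead sums of the potential `g_j(x) = ⌊x / e⌋ - b_{x mod e} + m_j - 1`.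
The base tuple condition says that `g_j` is nonpositive on the beads of `μ` and nonnegative
elsewhere, so each exchange of beads between `μ` and `λ` raises the sum. A bead `x` of `λ` on
runner `i - 1` with `x + 1` empty contributes at least `g_j(x) - g_j(x + 1) = K_i + 1`, so that
`t > K_i`.
-/

/-! ### Residue classes -/

section Residue

variable {e : ℕ}

/-- The indicator function of the residue class of `i` modulo `e`. On the abacus, it tests whether
the position `x` lies on runner `i`. -/
def residueIndicator (e : ℕ) (i x : ℤ) : ℤ := if x ≡ i [ZMOD e] then 1 else 0

lemma residueIndicator_add_one_add_one (i x : ℤ) :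
    residueIndicator e (i + 1) (x + 1) = residueIndicator e i x := by
  have h : x + 1 ≡ i + 1 [ZMOD e] ↔ x ≡ i [ZMOD e] :=
    ⟨Int.ModEq.add_right_cancel' 1, Int.ModEq.add_right 1⟩
  simp only [residueIndicator, h]

lemma sum_mul_residueIndicator (he : 0 < e) {F : ℤ → ℤ} (hF : Function.Periodic F e) (x : ℤ) :
    ∑ k ∈ Finset.range e, F k * residueIndicator e k x = F x := by
  have hx0 : 0 ≤ x % e := Int.emod_nonneg x (by omega)
  have hxe : x % e < e := Int.emod_lt_of_pos x (by omega)
  have hk_iff : ∀ k ∈ Finset.range e, x ≡ k [ZMOD e] ↔ (x % e).toNat = k := fun k hk => by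
    rw [Int.ModEq, Int.emod_eq_of_lt (a := (k : ℤ)) (by omega)
      (by exact_mod_cast Finset.mem_range.1 hk)]
    omega
  have hFx : F (x % e) = F x := by
    rw [Int.emod_def, mul_comm]
    exact hF.sub_int_mul_eq _
  calc ∑ k ∈ Finset.range e, F k * residueIndicator e k x
      = ∑ k ∈ Finset.range e, if (x % e).toNat = k then F k else 0 :=
        Finset.sum_congr rfl fun k hk => by simp [residueIndicator, hk_iff k hk]
    _ = F (x % e).toNat := by
        rw [Finset.sum_ite_eq, if_pos (Finset.mem_range.2 (by omega))]
    _ = F x := by rw [Int.toNat_of_nonneg hx0, hFx]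

lemma sub_ediv_eq_add_residueIndicator (he : 0 < e) (i x : ℤ) :
    (x - i) / e = (x - 1 - i) / e + residueIndicator e i x := by
  have he' : (0 : ℤ) < e := by exact_mod_cast he
  have hdvd : x ≡ i [ZMOD e] ↔ (x - i) % e = 0 := Int.emod_eq_emod_iff_emod_sub_eq_zero
  have hdiv := Int.mul_ediv_add_emod (x - i) e
  have hmod0 := Int.emod_nonneg (x - i) he'.ne'
  have hmod_lt := Int.emod_lt_of_pos (x - i) he'
  simp only [residueIndicator, hdvd]
  rw [← sub_eq_iff_eq_add, eq_comm, Int.ediv_eq_iff_of_pos he']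
  split_ifs with h
  · constructor <;> linarith
  · have hmod_pos : 1 ≤ (x - i) % e := by omega
    constructor <;> linarith

lemma sum_range_residueIndicator (he : 0 < e) (i x : ℤ) (n : ℕ) :
    ∑ c ∈ Finset.range n, residueIndicator e i (x + c) =
      (x + n - 1 - i) / e - (x - 1 - i) / e := by
  have htelescope := Finset.sum_range_sub (fun c : ℕ => (x + c - 1 - i) / (e : ℤ)) n
  rw [Nat.cast_zero, add_zero] at htelescope
  rw [← htelescope]
  refine Finset.sum_congr rfl fun c _ => ?_
  rw [Nat.cast_succ, ← add_assoc, add_sub_cancel_right, sub_ediv_eq_add_residueIndicator he,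
    add_sub_cancel_left]

lemma periodic_sub_ediv_sub_ediv (he : 0 < e) (i : ℤ) :
    Function.Periodic (fun x : ℤ => (x - i) / e - x / e) e := fun x => by
  have he' : (e : ℤ) ≠ 0 := by exact_mod_cast he.ne'
  simp only [add_sub_right_comm x, Int.add_ediv_of_dvd_right (dvd_refl (e : ℤ)),
    Int.ediv_self he', add_sub_add_right_eq_sub]

end Residue

/-! ### Beads of a partition -/

section Beads

variable {l l₀ : PartitionFun} {N : ℕ} {aj : ℤ}

/-- `l` has at most `N` nonzero parts. -/
def PartitionFun.LengthLE (l : PartitionFun) (N : ℕ) : Prop := ∀ b, N ≤ b → l.part b = 0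

lemma PartitionFun.eventually_lengthLE (l : PartitionFun) : ∀ᶠ N in Filter.atTop, l.LengthLE N := by
  obtain ⟨N₀, hN₀⟩ := l.finite_support
  exact Filter.eventually_atTop.2 ⟨N₀, fun N hN b hb => hN₀ b (hN.trans hb)⟩

/-- The β-number of row `b` (indexed from `0`): the `b`-th largest element of the β-set. -/
def betaNumber (aj : ℤ) (l : PartitionFun) (b : ℕ) : ℤ := (l.part b : ℤ) + aj - ((b : ℤ) + 1)

lemma betaNumber_strictAnti (aj : ℤ) (l : PartitionFun) : StrictAnti (betaNumber aj l) := by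
  intro b b' hbb'
  have := l.antitone hbb'.le
  unfold betaNumber
  omega

/-- The `N` largest elements of the β-set. If `l` has at most `N` parts, the remaining elements are
all the integers below `aj - N`, so that finite sums over `beads N` stand in for sums over the
infinite β-set. -/
def beads (N : ℕ) (aj : ℤ) (l : PartitionFun) : Finset ℤ := (Finset.range N).image (betaNumber aj l)

lemma sum_beads (N : ℕ) (aj : ℤ) (l : PartitionFun) (f : ℤ → ℤ) :
    ∑ x ∈ beads N aj l, f x = ∑ b ∈ Finset.range N, f (betaNumber aj l b) :=
  Finset.sum_image (betaNumber_strictAnti aj l).injective.injOn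

lemma card_beads (N : ℕ) (aj : ℤ) (l : PartitionFun) : (beads N aj l).card = N := by
  rw [beads, Finset.card_image_of_injective _ (betaNumber_strictAnti aj l).injective,
    Finset.card_range]

lemma mem_betaSet_of_lt (hN : l.LengthLE N) {x : ℤ} (hx : x < aj - N) : x ∈ betaSet aj l :=
  ⟨(aj - 1 - x).toNat, by rw [hN _ (by omega)]; omega⟩

lemma mem_beads_iff (hN : l.LengthLE N) {x : ℤ} :
    x ∈ beads N aj l ↔ x ∈ betaSet aj l ∧ aj - N ≤ x := by
  simp only [beads, Finset.mem_image, Finset.mem_range]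
  constructor
  · rintro ⟨b, hb, rfl⟩
    exact ⟨⟨b, rfl⟩, by unfold betaNumber; omega⟩
  · rintro ⟨⟨b, rfl⟩, hx⟩
    refine ⟨b, ?_, rfl⟩
    by_contra hb
    have := hN b (by omega)
    omega

lemma mem_beads_sdiff_iff (hN : l.LengthLE N) (hN₀ : l₀.LengthLE N) {x : ℤ} :
    x ∈ beads N aj l \ beads N aj l₀ ↔ x ∈ betaSet aj l ∧ x ∉ betaSet aj l₀ := by
  rw [Finset.mem_sdiff, mem_beads_iff hN, mem_beads_iff hN₀]
  have := mem_betaSet_of_lt (aj := aj) (x := x) hN₀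
  grind

/-- `g` is nonpositive on `S` and nonnegative off `S`, so that replacing an element of `S` by a
non-element never decreases a sum of values of `g`. -/
def Separates (g : ℤ → ℤ) (S : Set ℤ) : Prop := (∀ x ∈ S, g x ≤ 0) ∧ ∀ x ∉ S, 0 ≤ g x

section Separates

variable {g : ℤ → ℤ}

lemma Separates.nonneg_of_mem_beads_sdiff (hg : Separates g (betaSet aj l₀))
    (hN : l.LengthLE N) (hN₀ : l₀.LengthLE N) {x : ℤ} (hx : x ∈ beads N aj l \ beads N aj l₀) :
    0 ≤ g x :=
  hg.2 x ((mem_beads_sdiff_iff hN hN₀).1 hx).2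

lemma Separates.nonpos_of_mem_beads_sdiff (hg : Separates g (betaSet aj l₀))
    (hN : l.LengthLE N) (hN₀ : l₀.LengthLE N) {x : ℤ} (hx : x ∈ beads N aj l₀ \ beads N aj l) :
    g x ≤ 0 :=
  hg.1 x ((mem_beads_sdiff_iff hN₀ hN).1 hx).1

lemma Separates.sum_beads_le (hg : Separates g (betaSet aj l₀))
    (hN : l.LengthLE N) (hN₀ : l₀.LengthLE N) :
    ∑ x ∈ beads N aj l₀, g x ≤ ∑ x ∈ beads N aj l, g x := by
  rw [← sub_nonneg, ← Finset.sum_sdiff_sub_sum_sdiff, sub_nonneg]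
  calc ∑ x ∈ beads N aj l₀ \ beads N aj l, g x
      ≤ 0 := Finset.sum_nonpos fun _ => hg.nonpos_of_mem_beads_sdiff hN hN₀
    _ ≤ ∑ x ∈ beads N aj l \ beads N aj l₀, g x :=
        Finset.sum_nonneg fun _ => hg.nonneg_of_mem_beads_sdiff hN hN₀

lemma Separates.sub_le_sum_beads_sub (hg : Separates g (betaSet aj l₀))
    (hN : l.LengthLE N) (hN₀ : l₀.LengthLE N) {p q : ℤ} (hp : p ∈ betaSet aj l)
    (hq : q ∉ betaSet aj l) :
    g p - g q ≤ ∑ x ∈ beads N aj l, g x - ∑ x ∈ beads N aj l₀, g x := by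
  rw [← Finset.sum_sdiff_sub_sum_sdiff]
  have hgained : ∀ x ∈ beads N aj l \ beads N aj l₀, 0 ≤ g x :=
    fun _ => hg.nonneg_of_mem_beads_sdiff hN hN₀
  have hlost : ∀ x ∈ beads N aj l₀ \ beads N aj l, g x ≤ 0 :=
    fun _ => hg.nonpos_of_mem_beads_sdiff hN hN₀
  have hp_le : g p ≤ ∑ x ∈ beads N aj l \ beads N aj l₀, g x := by
    by_cases hp₀ : p ∈ betaSet aj l₀
    · exact (hg.1 p hp₀).trans (Finset.sum_nonneg hgained)
    · exact Finset.single_le_sum hgained ((mem_beads_sdiff_iff hN hN₀).2 ⟨hp, hp₀⟩)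
  have hq_ge : ∑ x ∈ beads N aj l₀ \ beads N aj l, g x ≤ g q := by
    by_cases hq₀ : q ∈ betaSet aj l₀
    · rw [← Finset.add_sum_erase _ _ ((mem_beads_sdiff_iff hN₀ hN).2 ⟨hq₀, hq⟩)]
      exact add_le_of_nonpos_right
        (Finset.sum_nonpos fun x hx => hlost x (Finset.mem_of_mem_erase hx))
    · exact (Finset.sum_nonpos hlost).trans (hg.2 q hq₀)
  exact sub_le_sub hp_le hq_ge

end Separates

end Beads

/-! ### Levels and base tuples -/

section Levels

variable {e r : ℕ}

lemma isGreatest_level (he : 0 < e) (aj : ℤ) (l : PartitionFun) (k : ℕ) :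
    IsGreatest {x : ℤ | x * (e : ℤ) + (k : ℤ) ∈ betaSet aj l} (level e aj l k) := by
  have he' : (0 : ℤ) < e := by exact_mod_cast he
  have hne : {x : ℤ | x * (e : ℤ) + (k : ℤ) ∈ betaSet aj l}.Nonempty := by
    obtain ⟨N, hN⟩ := l.eventually_lengthLE.exists
    refine ⟨(aj - N - k) / e - 1, mem_betaSet_of_lt hN ?_⟩
    linarith [Int.ediv_mul_le (aj - N - k) he'.ne']
  have hbdd : BddAbove {x : ℤ | x * (e : ℤ) + (k : ℤ) ∈ betaSet aj l} := by
    refine ⟨(aj + l.part 0) / e, ?_⟩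
    rintro x ⟨b, hb⟩
    have := l.antitone (Nat.zero_le b)
    exact Int.le_ediv_of_mul_le he' (by omega)
  exact ⟨Int.csSup_mem hne hbdd, fun x hx => le_csSup hbdd hx⟩

lemma level_add_mul (he : 0 < e) (aj m : ℤ) (l : PartitionFun) (k : ℕ) :
    level e (aj + e * m) l k = level e aj l k + m := by
  have hgreatest := isGreatest_level he aj l k
  refine (isGreatest_level he (aj + e * m) l k).unique ⟨?_, ?_⟩
  · obtain ⟨b, hb⟩ := hgreatest.1
    exact ⟨b, by linear_combination hb⟩
  · rintro x ⟨b, hb⟩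
    have := hgreatest.2 (show x - m ∈ _ from ⟨b, by linear_combination hb⟩)
    linarith

lemma IsECore.sub_mul_mem {aj : ℤ} {l : PartitionFun} (hl : IsECore e aj l) {x : ℤ}
    (hx : x ∈ betaSet aj l) (n : ℕ) : x - n * e ∈ betaSet aj l := by
  induction n with
  | zero => simpa using hx
  | succ n ih => simpa [add_mul, sub_sub] using hl _ ih

lemma IsECore.mem_betaSet_iff (he : 0 < e) {aj : ℤ} {l : PartitionFun} (hl : IsECore e aj l)
    (x : ℤ) : x ∈ betaSet aj l ↔ x / e ≤ level e aj l (x % e).toNat := by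
  have hcast : ((x % e).toNat : ℤ) = x % e := Int.toNat_of_nonneg (Int.emod_nonneg x (by omega))
  obtain ⟨hmem, hmax⟩ := isGreatest_level he aj l (x % e).toNat
  rw [Set.mem_ofPred_eq, hcast] at hmem
  have hdiv := Int.mul_ediv_add_emod x e
  constructor
  · intro hx
    refine hmax (show _ ∈ betaSet aj l from ?_)
    rwa [hcast, mul_comm, hdiv]
  · intro hle
    obtain ⟨n, hn⟩ := Int.le.dest hle
    have := hl.sub_mul_mem hmem n
    rwa [← hn, show (x / e + n) * e + x % e - n * e = x by linear_combination hdiv] at this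

section BaseTuple

variable {a a' : Fin r → ℤ} {mu : Multipartition r} {bt : ℕ → ℤ}

lemma IsBaseTuple.exists_level_add (he : 0 < e) (hbt : IsBaseTuple e a mu a' bt) (j : Fin r) :
    ∃ m : ℤ, ∀ k < e,
      level e (a j) (mu j) k + m = bt k ∨ level e (a j) (mu j) k + m = bt k + 1 := by
  obtain ⟨m, hm⟩ := hbt.1 j
  refine ⟨m, fun k hk => ?_⟩
  rw [← level_add_mul he, ← hm, add_sub_cancel]
  exact hbt.2 k hk j

lemma IsBaseTuple.add_const (he : 0 < e) (hbt : IsBaseTuple e a mu a' bt) (m : ℤ) :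
    IsBaseTuple e a mu (fun j => a' j + e * m) (fun k => bt k + m) := by
  refine ⟨fun j => ?_, fun k hk j => ?_⟩
  · rw [add_sub_right_comm]
    exact dvd_add (hbt.1 j) (dvd_mul_right _ _)
  · rw [level_add_mul he, add_right_comm, add_left_inj, add_left_inj]
    exact hbt.2 k hk j

/-- The runner to the left of runner `i`, cyclically. -/
def prevRunner (e i : ℕ) : ℕ := if i = 0 then e - 1 else i - 1

lemma prevRunner_lt {i : ℕ} (hi : i < e) : prevRunner e i < e := by
  unfold prevRunner
  split_ifs <;> omega

/-- `1` if passing from runner `i - 1` to runner `i` wraps around the abacus, raising the level of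
a position by one, and `0` otherwise. -/
def wrap (i : ℕ) : ℤ := if i = 0 then 1 else 0

-- Without base tuples the supremum and the infimum defining `Kconst` take the junk value `0`.
lemma exists_isBaseTuple_of_Kconst_nonneg {i : ℕ} (hK : 0 ≤ Kconst e a mu i) :
    ∃ a' bt, IsBaseTuple e a mu a' bt := by
  by_contra! hnone
  simp only [Kconst, hnone, false_and, exists_false, Set.ofPred_false, Int.csSup_empty,
    Int.csInf_empty] at hK
  split_ifs at hK <;> omega

lemma IsBaseTuple.exists_Kconst_eq (hr : 0 < r) (hbt : IsBaseTuple e a mu a' bt) {i : ℕ}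
    (hi : i < e) :
    ∃ a' bt, IsBaseTuple e a mu a' bt ∧
      Kconst e a mu i = bt i - bt (prevRunner e i) - wrap i - 1 := by
  have he : 0 < e := by omega
  set M : ℤ := sSup {x : ℤ | ∃ a' bt, IsBaseTuple e a mu a' bt ∧ bt i = x}
  set S : Set ℤ := {x | ∃ a' bt, IsBaseTuple e a mu a' bt ∧ bt i = M ∧ bt (prevRunner e i) = x}
  have hne : S.Nonempty :=
    ⟨_, _, _, hbt.add_const he (M - bt i), by ring, rfl⟩
  have hbdd : BddBelow S := by
    let j : Fin r := ⟨0, hr⟩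
    refine ⟨level e (a j) (mu j) (prevRunner e i) - level e (a j) (mu j) i + M - 1, ?_⟩
    rintro x ⟨a'', bt', hbt', hM, rfl⟩
    obtain ⟨m, hm⟩ := hbt'.exists_level_add he j
    have := hm i hi
    have := hm _ (prevRunner_lt hi)
    omega
  obtain ⟨a'', bt', hbt', hM, hinf⟩ := Int.csInf_mem hne hbdd
  refine ⟨a'', bt', hbt', ?_⟩
  have hK : Kconst e a mu i = M - sInf S - (if i = 0 then 2 else 1) := rfl
  rw [hK, hM, hinf, wrap]
  split_ifs <;> ring

end BaseTuple

end Levels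

/-! ### The potential of a base tuple -/

section Potential

variable {e : ℕ}

/-- The level of the position `x` relative to the base tuple `bt`, where `m` is the shift of the
level caused by the change of multicharge. It is normalised so that `potential` separates the
β-set of a core with base tuple `bt` from its complement. -/
def potential (e : ℕ) (bt : ℕ → ℤ) (m x : ℤ) : ℤ := x / e - bt (x % e).toNat + m - 1

lemma IsECore.separates_potential (he : 0 < e) {aj : ℤ} {l : PartitionFun} (hl : IsECore e aj l)
    {bt : ℕ → ℤ} {m : ℤ}
    (hm : ∀ k < e, level e aj l k + m = bt k ∨ level e aj l k + m = bt k + 1) :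
    Separates (potential e bt m) (betaSet aj l) := by
  have hlevel : ∀ x : ℤ, level e aj l (x % e).toNat + m = bt (x % e).toNat ∨
      level e aj l (x % e).toNat + m = bt (x % e).toNat + 1 := fun x =>
    hm _ (by have := Int.emod_lt_of_pos x (Int.natCast_pos.2 he); omega)
  refine ⟨fun x hx => ?_, fun x hx => ?_⟩ <;>
    rw [hl.mem_betaSet_iff he] at hx <;>
    have := hlevel x <;>
    unfold potential <;>
    omega

lemma potential_sub_potential_add_one {i : ℕ} (hi : i < e) {x : ℤ} (hx : x ≡ i - 1 [ZMOD e])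
    (bt : ℕ → ℤ) (m : ℤ) :
    potential e bt m x - potential e bt m (x + 1) = bt i - bt (prevRunner e i) - wrap i := by
  have he' : (0 : ℤ) < e := by omega
  have hsucc_mod : (x + 1) % e = i := by
    have h : (x + 1) % e = (i - 1 + 1) % e := hx.add_right 1
    rw [h, sub_add_cancel, Int.emod_eq_of_lt (by omega) (by omega)]
  have hsucc_div := Int.mul_ediv_add_emod (x + 1) e
  have hprev : (prevRunner e i : ℤ) = i - 1 + e * wrap i := by
    unfold prevRunner wrap
    split_ifs <;> omega
  obtain ⟨hdiv, hmod⟩ : x / e = (x + 1) / e - wrap i ∧ x % e = prevRunner e i := by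
    rw [Int.ediv_emod_unique he']
    exact ⟨by linear_combination hprev + hsucc_div - hsucc_mod, Int.natCast_nonneg _,
      by exact_mod_cast prevRunner_lt hi⟩
  unfold potential
  rw [hsucc_mod, hmod, hdiv, Int.toNat_natCast, Int.toNat_natCast]
  ring

end Potential

/-! ### Hubs, node counts and weights as bead sums -/

section BeadSum

variable {e r N : ℕ} {a : Fin r → ℤ} {lam mu : Multipartition r}

/-- The sum of `f j x` over the beads `x` of the component `j` of `lam`, for all `j`, where each
β-set is truncated to its `N` largest elements. -/
def beadSum (N : ℕ) (a : Fin r → ℤ) (lam : Multipartition r) (f : Fin r → ℤ → ℤ) : ℤ :=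
  ∑ j, ∑ x ∈ beads N (a j) (lam j), f j x

lemma beadSum_add (f g : Fin r → ℤ → ℤ) :
    beadSum N a lam (fun j x => f j x + g j x) = beadSum N a lam f + beadSum N a lam g := by
  simp only [beadSum, Finset.sum_add_distrib]

lemma beadSum_const (c : Fin r → ℤ) : beadSum N a lam (fun j _ => c j) = N * ∑ j, c j := by
  simp [beadSum, card_beads, Finset.mul_sum]

/-- The number of beads on runner `i` in the truncated abacus. -/
def runnerCount (e N : ℕ) (a : Fin r → ℤ) (lam : Multipartition r) (i : ℤ) : ℤ :=
  beadSum N a lam fun _ => residueIndicator e i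

lemma beadSum_eq_sum_mul_runnerCount (he : 0 < e) {F : ℤ → ℤ} (hF : Function.Periodic F e) :
    beadSum N a lam (fun _ => F) = ∑ k ∈ Finset.range e, F k * runnerCount e N a lam k := by
  simp only [runnerCount, beadSum, Finset.mul_sum]
  rw [Finset.sum_comm]
  refine Finset.sum_congr rfl fun j _ => ?_
  rw [Finset.sum_comm]
  exact Finset.sum_congr rfl fun x _ => (sum_mul_residueIndicator he hF x).symm

lemma removableCount_eq_sum {j : Fin r} (hN : (lam j).LengthLE N) (i : ℤ) :
    (removableCount e a lam i j : ℤ) = ∑ b ∈ Finset.range N,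
      if (lam j).part (b + 1) < (lam j).part b then
        residueIndicator e i (betaNumber (a j) (lam j) b) else 0 := by
  have hset : {p : ℕ × ℕ | (lam j).Removable p.1 p.2 ∧
      (a j + (p.2 : ℤ) - (p.1 : ℤ)) % (e : ℤ) = i % e} =
      Set.graphOn (fun b => (lam j).part b - 1) ((Finset.range N).filter fun b =>
        (lam j).part (b + 1) < (lam j).part b ∧ betaNumber (a j) (lam j) b ≡ i [ZMOD e]) := by
    ext ⟨b, c⟩
    have hlen := hN b
    have hres : (lam j).part b = c + 1 → betaNumber (a j) (lam j) b = a j + c - b := by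
      unfold betaNumber; omega
    simp only [PartitionFun.Removable, Set.mem_ofPred_eq, Set.mem_graphOn, Finset.mem_coe,
      Int.ModEq]
    grind
  rw [removableCount, hset, Set.ncard_graphOn, Set.ncard_coe_finset, Finset.card_filter]
  push_cast
  simp only [residueIndicator, ite_and]

lemma addableCount_eq_sum {j : Fin r} (hN : (lam j).LengthLE N) (i : ℤ) :
    (addableCount e a lam i j : ℤ) = ∑ b ∈ Finset.range (N + 1),
      if b = 0 ∨ (lam j).part b < (lam j).part (b - 1) then
        residueIndicator e i (betaNumber (a j) (lam j) b + 1) else 0 := by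
  have hset : {p : ℕ × ℕ | (lam j).Addable p.1 p.2 ∧
      (a j + (p.2 : ℤ) - (p.1 : ℤ)) % (e : ℤ) = i % e} =
      Set.graphOn (lam j).part ((Finset.range (N + 1)).filter fun b =>
        (b = 0 ∨ (lam j).part b < (lam j).part (b - 1)) ∧
          betaNumber (a j) (lam j) b + 1 ≡ i [ZMOD e]) := by
    ext ⟨b, c⟩
    have hlen := hN (b - 1)
    have hres : (lam j).part b = c → betaNumber (a j) (lam j) b + 1 = a j + c - b := by
      unfold betaNumber; omega
    simp only [PartitionFun.Addable, Set.mem_ofPred_eq, Set.mem_graphOn, Finset.mem_coe, Int.ModEq]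
    grind
  rw [addableCount, hset, Set.ncard_graphOn, Set.ncard_coe_finset, Finset.card_filter]
  push_cast
  simp only [residueIndicator, ite_and]

-- The addable node of row `b + 1` is paired with the removable node of row `b`: if the two rows
-- have equal length, neither node exists and the two indicators on the right cancel.
lemma delta_eq_sum {j : Fin r} (hN : (lam j).LengthLE N) (i : ℤ) :
    delta e a lam i j = ∑ x ∈ beads N (a j) (lam j), residueIndicator e i x -
      ∑ x ∈ beads N (a j) (lam j), residueIndicator e i (x + 1) -
      residueIndicator e i (a j - N) := by
  set β := betaNumber (a j) (lam j) with hβ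
  have hlast : a j - N = β N + 1 := by
    rw [hβ, betaNumber, hN N le_rfl]; push_cast; ring
  have hrow : ∀ b, (if (lam j).part (b + 1) < (lam j).part b then
        residueIndicator e i (β b) else 0) -
      (if (lam j).part (b + 1) < (lam j).part b then residueIndicator e i (β (b + 1) + 1) else 0) =
      residueIndicator e i (β b) - residueIndicator e i (β (b + 1) + 1) := by
    intro b
    split_ifs with hlt
    · rfl
    · have hpart : (lam j).part (b + 1) = (lam j).part b :=
        ((lam j).antitone b.le_succ).antisymm (not_lt.1 hlt)
      have hβ_succ : β (b + 1) + 1 = β b := by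
        rw [hβ, betaNumber, betaNumber, hpart]; push_cast; ring
      rw [hβ_succ, sub_self, sub_self]
  rw [delta, removableCount_eq_sum hN, addableCount_eq_sum hN, sum_beads, sum_beads, hlast,
    sub_sub, ← Finset.sum_range_succ (fun b => residueIndicator e i (β b + 1)),
    Finset.sum_range_succ', Finset.sum_range_succ' (fun b => residueIndicator e i (β b + 1))]
  simp only [Nat.add_sub_cancel, Nat.succ_ne_zero, false_or, true_or, if_true]
  rw [← sub_sub, ← sub_sub, ← Finset.sum_sub_distrib, ← Finset.sum_sub_distrib,
    Finset.sum_congr rfl fun b _ => hrow b]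

lemma hub_add_one (hN : ∀ j, (lam j).LengthLE N) (i : ℤ) :
    hub e a lam (i + 1) = runnerCount e N a lam (i + 1) - runnerCount e N a lam i -
      ∑ j, residueIndicator e (i + 1) (a j - N) := by
  simp only [hub, runnerCount, beadSum, fun j => delta_eq_sum (e := e) (a := a) (hN j),
    residueIndicator_add_one_add_one, Finset.sum_sub_distrib]

lemma nodeCount_eq_sum (hN : ∀ j, (lam j).LengthLE N) (i : ℤ) :
    (nodeCount e a lam i : ℤ) = ∑ j, ∑ b ∈ Finset.range N,
      ∑ c ∈ Finset.range ((lam j).part b), residueIndicator e i (a j - b + c) := by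
  let rows : Finset (Fin r × ℕ) := Finset.univ ×ˢ Finset.range N
  let columns (p : Fin r × ℕ) : Finset ℕ :=
    (Finset.range ((lam p.1).part p.2)).filter fun c => a p.1 - p.2 + c ≡ i [ZMOD e]
  have hset : {x : Node r | (lam x.2.2).InDiag x.1 x.2.1 ∧
      (a x.2.2 + (x.2.1 : ℤ) - (x.1 : ℤ)) % (e : ℤ) = i % e} =
      (fun y : (_ : Fin r × ℕ) × ℕ => ((y.1.2, y.2, y.1.1) : Node r)) '' (rows.sigma columns) := by
    ext ⟨b, c, j⟩
    have hlen := hN j b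
    simp only [PartitionFun.InDiag, Set.mem_ofPred_eq, Set.mem_image, Finset.mem_coe,
      Finset.mem_sigma, Sigma.exists, Prod.exists, Prod.mk.injEq, rows, columns,
      Finset.mem_product, Finset.mem_univ, Finset.mem_range, Int.ModEq]
    grind
  have hinj : Function.Injective
      fun y : (_ : Fin r × ℕ) × ℕ => ((y.1.2, y.2, y.1.1) : Node r) := by
    rintro ⟨⟨j, b⟩, c⟩ ⟨⟨j', b'⟩, c'⟩ h
    simp_all
  rw [nodeCount, hset, Set.ncard_image_of_injective _ hinj, Set.ncard_coe_finset,
    Finset.card_sigma, Finset.sum_product]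
  simp only [columns, residueIndicator, Finset.card_filter]
  push_cast
  rfl

lemma nodeCount_eq_beadSum_sub (he : 0 < e) (hN : ∀ j, (lam j).LengthLE N) (i : ℤ) :
    (nodeCount e a lam i : ℤ) = beadSum N a lam (fun _ x => (x - i) / e) -
      ∑ j, ∑ b ∈ Finset.range N, (a j - b - 1 - i) / (e : ℤ) := by
  rw [nodeCount_eq_sum hN]
  simp only [beadSum, sum_beads, sum_range_residueIndicator he, ← Finset.sum_sub_distrib]
  refine Finset.sum_congr rfl fun j _ => Finset.sum_congr rfl fun b _ => ?_
  congr 2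
  unfold betaNumber
  ring

/-- The sum of the levels of the beads of all components in the truncated abacus. -/
def totalLevel (e N : ℕ) (a : Fin r → ℤ) (lam : Multipartition r) : ℤ :=
  beadSum N a lam fun _ x => x / e

-- The hub determines the differences between consecutive runner counts, and their total is `N * r`.
lemma SameHub.runnerCount_eq (hsame : SameHub e a lam mu) (he : 0 < e)
    (hN : ∀ j, (lam j).LengthLE N) (hN₀ : ∀ j, (mu j).LengthLE N) (i : ℤ) :
    runnerCount e N a lam i = runnerCount e N a mu i := by
  set D : ℤ → ℤ := fun i => runnerCount e N a lam i - runnerCount e N a mu i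
  have hperiodic : Function.Periodic D 1 := fun i => by
    have := hsame (i + 1)
    rw [hub_add_one hN, hub_add_one hN₀] at this
    simp only [D]
    linarith
  have hconst : ∀ i, D i = D 0 := fun i => by simpa using hperiodic.int_mul_eq i
  have hcount (nu : Multipartition r) :
      ∑ k ∈ Finset.range e, runnerCount e N a nu k = beadSum N a nu fun _ _ => 1 := by
    simp [beadSum_eq_sum_mul_runnerCount he (F := fun _ => 1) fun _ => rfl]
  have hsum : (e : ℤ) * D 0 = 0 := calc
    (e : ℤ) * D 0 = ∑ k ∈ Finset.range e, D k := by simp [hconst]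
    _ = 0 := by rw [Finset.sum_sub_distrib, hcount, hcount, beadSum_const, beadSum_const, sub_self]
  have hD0 : D 0 = 0 := (mul_eq_zero.1 hsum).resolve_left (by exact_mod_cast he.ne')
  exact sub_eq_zero.1 ((hconst i).trans hD0)

lemma SameHub.beadSum_eq_of_periodic (hsame : SameHub e a lam mu) (he : 0 < e)
    (hN : ∀ j, (lam j).LengthLE N) (hN₀ : ∀ j, (mu j).LengthLE N) {F : ℤ → ℤ}
    (hF : Function.Periodic F e) :
    beadSum N a lam (fun _ => F) = beadSum N a mu fun _ => F := by
  simp only [beadSum_eq_sum_mul_runnerCount he hF, hsame.runnerCount_eq he hN hN₀]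

lemma SameHub.nodeCount_sub_nodeCount (hsame : SameHub e a lam mu) (he : 0 < e)
    (hN : ∀ j, (lam j).LengthLE N) (hN₀ : ∀ j, (mu j).LengthLE N) (i : ℤ) :
    (nodeCount e a lam i : ℤ) - nodeCount e a mu i =
      totalLevel e N a lam - totalLevel e N a mu := by
  have hsplit (nu : Multipartition r) : beadSum N a nu (fun _ x => (x - i) / e) =
      totalLevel e N a nu + beadSum N a nu fun _ x => (x - i) / e - x / e := by
    simp only [totalLevel, ← beadSum_add, add_sub_cancel]
  rw [nodeCount_eq_beadSum_sub he hN, nodeCount_eq_beadSum_sub he hN₀, hsplit, hsplit,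
    hsame.beadSum_eq_of_periodic he hN hN₀ (periodic_sub_ediv_sub_ediv he i)]
  ring

lemma SameHub.weight_eq (hsame : SameHub e a lam mu) (he : 0 < e)
    (hN : ∀ j, (lam j).LengthLE N) (hN₀ : ∀ j, (mu j).LengthLE N) :
    weight e a lam = weight e a mu + (totalLevel e N a lam - totalLevel e N a mu : ℤ) * r := by
  set t := totalLevel e N a lam - totalLevel e N a mu
  have hcount : ∀ i : ℤ, (nodeCount e a lam i : ℚ) = nodeCount e a mu i + t := fun i => by
    exact_mod_cast sub_eq_iff_eq_add'.1 (hsame.nodeCount_sub_nodeCount he hN hN₀ i)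
  simp only [weight, hcount, Finset.sum_add_distrib, Finset.sum_const, Finset.card_univ,
    Fintype.card_fin, nsmul_eq_mul, add_sub_add_right_eq_sub]
  ring

lemma SameHub.beadSum_potential_sub (hsame : SameHub e a lam mu) (he : 0 < e)
    (hN : ∀ j, (lam j).LengthLE N) (hN₀ : ∀ j, (mu j).LengthLE N) (bt : ℕ → ℤ) (m : Fin r → ℤ) :
    beadSum N a lam (fun j => potential e bt (m j)) -
      beadSum N a mu (fun j => potential e bt (m j)) =
      totalLevel e N a lam - totalLevel e N a mu := by
  have hperiodic : Function.Periodic (fun x : ℤ => -bt (x % e).toNat) e := fun x => by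
    simp only [Int.add_emod_right]
  have hsplit (nu : Multipartition r) : beadSum N a nu (fun j => potential e bt (m j)) =
      totalLevel e N a nu + (beadSum N a nu fun _ x => -bt (x % e).toNat) +
        beadSum N a nu fun j _ => m j - 1 := by
    simp only [totalLevel, ← beadSum_add]
    congr! 3
    unfold potential
    ring
  rw [hsplit, hsplit, hsame.beadSum_eq_of_periodic he hN hN₀ hperiodic, beadSum_const,
    beadSum_const]
  ring

end BeadSum

/-! ### Weights above the core block -/

section Main

variable {e r : ℕ} {a a' : Fin r → ℤ} {lam mu : Multipartition r} {bt : ℕ → ℤ} {i : ℕ}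

lemma sub_le_beadSum_sub {N : ℕ} {g : Fin r → ℤ → ℤ}
    (hg : ∀ j, Separates (g j) (betaSet (a j) (mu j)))
    (hN : ∀ j, (lam j).LengthLE N) (hN₀ : ∀ j, (mu j).LengthLE N) {j : Fin r} {p q : ℤ}
    (hp : p ∈ betaSet (a j) (lam j)) (hq : q ∉ betaSet (a j) (lam j)) :
    g j p - g j q ≤ beadSum N a lam g - beadSum N a mu g := calc
  g j p - g j q
    ≤ ∑ x ∈ beads N (a j) (lam j), g j x - ∑ x ∈ beads N (a j) (mu j), g j x :=
      (hg j).sub_le_sum_beads_sub (hN j) (hN₀ j) hp hq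
  _ ≤ ∑ j, (∑ x ∈ beads N (a j) (lam j), g j x - ∑ x ∈ beads N (a j) (mu j), g j x) :=
      Finset.single_le_sum (f := fun j =>
          ∑ x ∈ beads N (a j) (lam j), g j x - ∑ x ∈ beads N (a j) (mu j), g j x)
        (fun j _ => sub_nonneg.2 ((hg j).sum_beads_le (hN j) (hN₀ j))) (Finset.mem_univ j)
  _ = beadSum N a lam g - beadSum N a mu g := Finset.sum_sub_distrib _ _

theorem IsBaseTuple.weight_add_le_weight (hbt : IsBaseTuple e a mu a' bt)
    (hcore : IsMulticore e a mu) (hsame : SameHub e a lam mu) (hi : i < e) {j : Fin r} {x : ℤ}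
    (hxi : x ≡ i - 1 [ZMOD e]) (hx : x ∈ betaSet (a j) (lam j))
    (hx_succ : x + 1 ∉ betaSet (a j) (lam j)) :
    weight e a mu + (bt i - bt (prevRunner e i) - wrap i : ℤ) * r ≤ weight e a lam := by
  have he : 0 < e := by omega
  obtain ⟨N, hN, hN₀⟩ :=
    ((Filter.eventually_all.2 fun j => (lam j).eventually_lengthLE).and
      (Filter.eventually_all.2 fun j => (mu j).eventually_lengthLE)).exists
  choose m hm using hbt.exists_level_add he
  have hseparates : ∀ j, Separates (potential e bt (m j)) (betaSet (a j) (mu j)) :=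
    fun j => (hcore j).separates_potential he (hm j)
  have hgain : bt i - bt (prevRunner e i) - wrap i ≤
      totalLevel e N a lam - totalLevel e N a mu := by
    rw [← potential_sub_potential_add_one hi hxi bt (m j),
      ← hsame.beadSum_potential_sub he hN hN₀ bt m]
    exact sub_le_beadSum_sub hseparates hN hN₀ hx hx_succ
  rw [hsame.weight_eq he hN hN₀]
  gcongr

theorem stmt_11_general (hi : i < e) (hcore : IsMulticore e a mu) (hmin : MinimalWeight e a mu)
    (hsame : SameHub e a lam mu) (hw : weight e a lam ≤ weight e a mu + Kconst e a mu i * r)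
    (j : Fin r) {b : ℤ} (hbi : b ≡ i - 1 [ZMOD e]) (hb : b ∈ betaSet (a j) (lam j)) :
    b + 1 ∈ betaSet (a j) (lam j) := by
  have hr : (0 : ℚ) < r := by exact_mod_cast j.pos
  have hK : 0 ≤ Kconst e a mu i := by
    have hle := (hmin lam fun i => (hsame i).symm).trans hw
    exact_mod_cast nonneg_of_mul_nonneg_left (le_add_iff_nonneg_right _ |>.1 hle) hr
  obtain ⟨_, _, hbt₀⟩ := exists_isBaseTuple_of_Kconst_nonneg hK
  obtain ⟨a', bt, hbt, hK_eq⟩ := hbt₀.exists_Kconst_eq j.pos hi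
  by_contra hb_succ
  have hlow := hbt.weight_add_le_weight hcore hsame hi hbi hb hb_succ
  rw [← sub_add_cancel (_ - wrap i) 1, ← hK_eq] at hlow
  push_cast at hlow
  linarith

end Main

/-- Lemma 5.3: fix `i ∈ {0,…,e−1}` and let `B` be a block with
core block `C` such that `w(B) ≤ w(C) + K_i(C)·r` and `δ_i(B) ≥ 0`. Then no
component of any multipartition `λ` in `B` has a bead on runner `i−1` with an
empty position immediately to its right on runner `i`. -/
theorem stmt_11 {e r : ℕ} (he : 2 ≤ e) (hr : 0 < r) (a : Fin r → ℤ)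
    (i : ℕ) (hi : i < e)
    (mu0 : Multipartition r) (hmu0core : IsMulticore e a mu0)
    (hmu0min : MinimalWeight e a mu0)
    (lam : Multipartition r) (hsame : SameHub e a lam mu0)
    (hw : weight e a lam ≤ weight e a mu0 + (Kconst e a mu0 i : ℚ) * (r : ℚ))
    (hdel : 0 ≤ hub e a lam (i : ℤ)) :
    ∀ j : Fin r,
      (i ≠ 0 → ¬∃ b : ℤ, b % (e : ℤ) = ((i : ℤ) - 1) % e ∧
        b ∈ betaSet (a j) (lam j) ∧ b + 1 ∉ betaSet (a j) (lam j)) ∧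
      (i = 0 → ¬∃ b : ℤ, b % (e : ℤ) = ((e : ℤ) - 1) % e ∧
        b ∈ betaSet (a j) (lam j) ∧ b + 1 ∉ betaSet (a j) (lam j) ∧
        b + (e : ℤ) + 1 ∉ betaSet (a j) (lam j)) := by
  intro j
  have hright := fun b => stmt_11_general (b := b) hi hmu0core hmu0min hsame hw j
  refine ⟨fun _ ⟨b, hbi, hb, hb_succ⟩ => hb_succ (hright b hbi hb), ?_⟩
  rintro rfl ⟨b, hbi, hb, hb_succ, -⟩
  exact hb_succ (hright b (by simpa [Int.ModEq, sub_eq_add_neg] using hbi) hb)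

end AK
end
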